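/- Let n and M be natural numbers, τ : Fin n → Fin M an assignment of observations to tasks, K_X a real n×n symmetric positive semidefinite matrix, and μ a real number with 0 ≤ μ ≤ 1. Then the matrix A_μ defined by (A_μ)ᵢⱼ = K_X ᵢⱼ if τ(i) = τ(j) and (A_μ)ᵢⱼ = μ · K_X ᵢⱼ otherwise is symmetric positive semidefinite. -/

import Mathlib

open Matrix

section UniformSimilarity

variable {ι κ R : Type*} [DecidableEq κ]

/-- The matrix `Z_μ` of pairwise similarities between the tasks `τ i` of the observations `i`,
where any two distinct tasks have the same similarity `μ`. Taking the Hadamard product with it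
turns a Gram matrix `K_X` into the augmented Gram matrix `A_μ`. -/
def uniformSimilarity [One R] (τ : ι → κ) (μ : R) : Matrix ι ι R :=
  of fun i j => if τ i = τ j then 1 else μ

theorem uniformSimilarity_hadamard [MulOneClass R] (τ : ι → κ) (μ : R) (K : Matrix ι ι R) :
    uniformSimilarity τ μ ⊙ K = of fun i j => if τ i = τ j then K i j else μ * K i j := by
  ext i j
  simp [uniformSimilarity]

theorem uniformSimilarity_eq_convex_combination [NonAssocRing R] (τ : ι → κ) (μ : R) :
    uniformSimilarity τ μ =
      (1 - μ) • (1 : Matrix κ κ R).submatrix τ τ + μ • (of 1 : Matrix ι ι R) := by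
  ext i j
  by_cases h : τ i = τ j <;> simp [uniformSimilarity, one_apply, h]

theorem posSemidef_of_one [Ring R] [PartialOrder R] [StarRing R] [StarOrderedRing R] :
    (of 1 : Matrix ι ι R).PosSemidef :=
  (PosSemidef.one (n := Unit)).submatrix fun _ : ι => ()

theorem posSemidef_uniformSimilarity [CommRing R] [PartialOrder R] [StarRing R]
    [StarOrderedRing R] (τ : ι → κ) {μ : R} (hμ0 : 0 ≤ μ) (hμ1 : μ ≤ 1) :
    (uniformSimilarity τ μ).PosSemidef := by
  have same_task : ((1 : Matrix κ κ R).submatrix τ τ).PosSemidef := PosSemidef.one.submatrix τ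
  rw [uniformSimilarity_eq_convex_combination]
  exact (same_task.smul (sub_nonneg.mpr hμ1)).add (posSemidef_of_one.smul hμ0)

open scoped ComplexOrder in
theorem uniform_similarity_posSemidef_general {𝕜 : Type*} [RCLike 𝕜] (τ : ι → κ)
    {K : Matrix ι ι 𝕜} (hK : K.PosSemidef) {μ : 𝕜} (hμ0 : 0 ≤ μ) (hμ1 : μ ≤ 1) :
    (of fun i j => if τ i = τ j then K i j else μ * K i j).PosSemidef := by
  rw [← uniformSimilarity_hadamard]
  exact (posSemidef_uniformSimilarity τ hμ0 hμ1).hadamard hK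

end UniformSimilarity

/-- The uniform-similarity augmented Gram matrix `A_μ`, with entries `K_X i j` when
observations `i, j` belong to the same task and `μ · K_X i j` otherwise, is positive
semidefinite whenever `K_X` is positive semidefinite and `0 ≤ μ ≤ 1`. -/
theorem uniform_similarity_posSemidef (n M : ℕ) (τ : Fin n → Fin M)
    (KX : Matrix (Fin n) (Fin n) ℝ) (hKX : KX.PosSemidef)
    (μ : ℝ) (hμ0 : 0 ≤ μ) (hμ1 : μ ≤ 1) :
    (Matrix.of fun i j => if τ i = τ j then KX i j else μ * KX i j).PosSemidef :=
  uniform_similarity_posSemidef_general τ hKX hμ0 hμ1
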